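/- Let F be a maximal fan with at least four elements in a 3-connected matroid M that is not a wheel or a whirl, and let f be an end of F. If f is a spoke element then M \ f is 3-connected, and if f is a rim element then M / f is 3-connected. -/

import Mathlib

open Set Matroid

variable {α β : Type*}

namespace NDP

/-- The rank of a set `X` in a matroid `M`: the largest cardinality of an
independent subset of `X` (intended for finite matroids). -/
noncomputable def rk (M : Matroid α) (X : Set α) : ℕ :=
  sSup {n : ℕ | ∃ I, M.Indep I ∧ I ⊆ X ∧ I.ncard = n}

/-- The connectivity function `λ_M(X) = r(X) + r(E − X) − r(M)`, valued in `ℤ`. -/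
noncomputable def lam (M : Matroid α) (X : Set α) : ℤ :=
  (rk M X : ℤ) + (rk M (M.E \ X) : ℤ) - (rk M M.E : ℤ)

/-- Deletion of a set of elements. -/
def delete (M : Matroid α) (D : Set α) : Matroid α := M ↾ (M.E \ D)

/-- Contraction of a set of elements, defined by duality. -/
def contract (M : Matroid α) (C : Set α) : Matroid α := (delete M✶ C)✶

/-- `X` is a `k`-separating set of `M`. -/
def Separating (M : Matroid α) (k : ℕ) (X : Set α) : Prop :=
  X ⊆ M.E ∧ lam M X ≤ (k : ℤ) - 1

/-- `X` is exactly `k`-separating in `M`. -/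
def ExactlySeparating (M : Matroid α) (k : ℕ) (X : Set α) : Prop :=
  X ⊆ M.E ∧ lam M X = (k : ℤ) - 1

/-- `(X, M.E \ X)` is a `k`-separation of `M`. -/
def IsKSeparation (M : Matroid α) (k : ℕ) (X : Set α) : Prop :=
  Separating M k X ∧ k ≤ X.ncard ∧ k ≤ (M.E \ X).ncard

/-- A matroid is connected if it has no 1-separations. -/
def Connected (M : Matroid α) : Prop := ∀ X, ¬ IsKSeparation M 1 X

/-- A matroid is 3-connected if it has no k-separations for k < 3. -/
def ThreeConnected (M : Matroid α) : Prop := ∀ k < 3, ∀ X, ¬ IsKSeparation M k X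

/-- A circuit: a minimal dependent set. -/
def Circuit (M : Matroid α) (C : Set α) : Prop :=
  C ⊆ M.E ∧ ¬ M.Indep C ∧ ∀ D, D ⊂ C → M.Indep D

def Cocircuit (M : Matroid α) (C : Set α) : Prop := Circuit M✶ C

def Triangle (M : Matroid α) (T : Set α) : Prop := Circuit M T ∧ T.ncard = 3

def Triad (M : Matroid α) (T : Set α) : Prop := Cocircuit M T ∧ T.ncard = 3

/-- `N` is a minor of `M`. -/
def Minor (N M : Matroid α) : Prop := ∃ C D, N = delete (contract M C) D

/-- `M` has a minor isomorphic to `N`. -/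
def IsoMinor (M : Matroid α) (N : Matroid β) : Prop :=
  ∃ (f : β → α) (hf : Set.InjOn f N.E), Minor (N.map f hf) M

/-- `X` is a set of representatives for the simplification of `M`:
one non-loop element from each parallel class. -/
def SimpRep (M : Matroid α) (X : Set α) : Prop :=
  X ⊆ M.E ∧ (∀ e ∈ X, M.Indep {e}) ∧
  (∀ e ∈ M.E, M.Indep {e} → ∃ f ∈ X, f ∈ M.closure {e}) ∧
  (∀ f ∈ X, ∀ g ∈ X, f ∈ M.closure {g} → f = g)

/-- `si M` (the simplification of `M`) is a 3-connected matroid. -/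
def SiThreeConnected (M : Matroid α) : Prop :=
  ∀ X, SimpRep M X → ThreeConnected (M ↾ X)

/-- `co M` (the cosimplification of `M`) is a 3-connected matroid. -/
def CoThreeConnected (M : Matroid α) : Prop := SiThreeConnected M✶

/-- The restriction of `M` to `P` is isomorphic to the rank-`r` uniform matroid on `P`. -/
def UnifRestr (M : Matroid α) (r : ℕ) (P : Set α) : Prop :=
  P ⊆ M.E ∧ ∀ X ⊆ P, (M.Indep X ↔ X.ncard ≤ r)

/-- A set is fully closed if it is closed in `M` and in `M✶`. -/
def FullClosed (M : Matroid α) (F : Set α) : Prop :=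
  M.closure F = F ∧ M✶.closure F = F

/-- The full closure of `X`: the intersection of all fully closed sets containing `X`. -/
def fcl (M : Matroid α) (X : Set α) : Set α :=
  ⋂₀ {F | X ⊆ F ∧ FullClosed M F}

/-- `(X, {z}, Y)` is a vertical 3-separation of `M`. -/
def VertThreeSep (M : Matroid α) (X : Set α) (z : α) (Y : Set α) : Prop :=
  X ∪ {z} ∪ Y = M.E ∧ Disjoint X Y ∧ z ∉ X ∧ z ∉ Y ∧
  IsKSeparation M 3 (X ∪ {z}) ∧ 3 ≤ rk M (X ∪ {z}) ∧ 3 ≤ rk M Y ∧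
  IsKSeparation M 3 X ∧ 3 ≤ rk M X ∧ 3 ≤ rk M (Y ∪ {z}) ∧
  z ∈ M.closure X ∧ z ∈ M.closure Y

/-- `M` is a wheel or a whirl: its ground set has a cyclic ordering of alternating
spokes and rims in which consecutive triples are alternately triangles and triads. -/
def IsWheelOrWhirl (M : Matroid α) : Prop :=
  ∃ (n : ℕ) (s r : ZMod n → α), 2 ≤ n ∧
    Function.Injective (fun p : ZMod n × Bool => if p.2 then s p.1 else r p.1) ∧
    Set.range s ∪ Set.range r = M.E ∧
    ∀ i : ZMod n, Triangle M {s i, r i, s (i + 1)} ∧ Triad M {r i, s (i + 1), r (i + 1)}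

/-- `f` (restricted to `{0, …, k−1}`) is a fan ordering of length `k` in `M`. -/
def IsFanOrd (M : Matroid α) (k : ℕ) (f : ℕ → α) : Prop :=
  3 ≤ k ∧ Set.InjOn f (Set.Iio k) ∧ (∀ i < k, f i ∈ M.E) ∧
  (Triangle M {f 0, f 1, f 2} ∨ Triad M {f 0, f 1, f 2}) ∧
  ∀ i, i + 3 < k →
    (Triangle M {f i, f (i+1), f (i+2)} → Triad M {f (i+1), f (i+2), f (i+3)}) ∧
    (Triad M {f i, f (i+1), f (i+2)} → Triangle M {f (i+1), f (i+2), f (i+3)})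

/-- `F` is a fan of `M`. -/
def IsFan (M : Matroid α) (F : Set α) : Prop :=
  ∃ k f, IsFanOrd M k f ∧ F = f '' Set.Iio k

/-- `F` is a maximal fan of `M`. -/
def IsMaximalFan (M : Matroid α) (F : Set α) : Prop :=
  IsFan M F ∧ ∀ F', IsFan M F' → F ⊆ F' → F' = F

end NDP

/-! Suppose that `f 0` is a spoke end and that deleting it destroys 3-connectedness. The two sides
of a 2-separation of the deletion must split `f 1` from `f 2`, since otherwise `f 0` could be put
back. The triad `{f 1, f 2, f 3}` then allows `f 1` or `f 2` to change sides, which forces the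
side it leaves to be a pair; together with `f 0` this pair is a triad `{g, f 0, f 1}` or `{g, f 0,
f 2}` with `g` outside the first four elements. In the first case maximality puts `g` in the fan;
orthogonality makes it the last element, and then the fan is 2-separating, hence everything, and
closes up to a wheel or whirl. The second case reduces to the first: a fan with four elements may
have its two middle elements exchanged, and in a longer one orthogonality gives `g = f 4`, so that
`M` has six elements and the complement of `{f 2, f 3, f 4}` is a triad through `f 0` and `f 1`.
Rim ends follow by duality. -/

namespace NDP

section Rank

variable {M : Matroid α} {X Y : Set α} {e : α}

lemma cast_rk (M : Matroid α) [M.RankFinite] (X : Set α) : (rk M X : ℕ∞) = M.eRk X := by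
  obtain ⟨I, hI⟩ := M.exists_isBasis' X
  have hgreatest : IsGreatest {n : ℕ | ∃ J, M.Indep J ∧ J ⊆ X ∧ J.ncard = n} I.ncard := by
    refine ⟨⟨I, hI.indep, hI.subset, rfl⟩, ?_⟩
    rintro _ ⟨J, hJ, hJX, rfl⟩
    have hle := hJ.encard_le_eRk_of_subset hJX
    rw [← hI.encard_eq_eRk, ← hJ.finite.cast_ncard_eq, ← hI.indep.finite.cast_ncard_eq] at hle
    exact_mod_cast hle
  rw [rk, hgreatest.csSup_eq, hI.indep.finite.cast_ncard_eq, hI.encard_eq_eRk]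

lemma rk_mono [M.RankFinite] (h : X ⊆ Y) : rk M X ≤ rk M Y := by
  exact_mod_cast (cast_rk M X).trans_le ((M.eRk_mono h).trans_eq (cast_rk M Y).symm)

lemma rk_insert_le (M : Matroid α) [M.RankFinite] (e : α) (X : Set α) :
    rk M (insert e X) ≤ rk M X + 1 := by
  have h := M.eRk_insert_le_add_one e X
  simp only [← cast_rk] at h
  exact_mod_cast h

lemma rk_insert_of_mem_closure [M.RankFinite] (he : e ∈ M.closure X) :
    rk M (insert e X) = rk M X := by
  have h : M.eRk (insert e X) = M.eRk X := by
    rw [← M.eRk_closure_eq, closure_insert_eq_of_mem_closure he, M.eRk_closure_eq]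
  simp only [← cast_rk] at h
  exact_mod_cast h

lemma rk_le_ncard (M : Matroid α) [M.RankFinite] (hX : X.Finite) : rk M X ≤ X.ncard := by
  have h := M.eRk_le_encard X
  rw [← cast_rk, ← hX.cast_ncard_eq] at h
  exact_mod_cast h

lemma indep_iff_rk_eq_ncard [M.RankFinite] (hX : X.Finite) : M.Indep X ↔ rk M X = X.ncard := by
  rw [indep_iff_eRk_eq_encard_of_finite hX, ← cast_rk, ← hX.cast_ncard_eq]
  norm_cast

lemma rk_dual_add_rk_ground [M.Finite] (hX : X ⊆ M.E) :
    rk M✶ X + rk M M.E = rk M (M.E \ X) + X.ncard := by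
  have h := M.eRk_dual_add_eRank X hX
  rw [eRank_def, ← (M.ground_finite.subset hX).cast_ncard_eq] at h
  simp only [← cast_rk] at h
  exact_mod_cast h

lemma rk_dual_ground_add_rk_ground (M : Matroid α) [M.Finite] :
    rk M✶ M.E + rk M M.E = M.E.ncard := by
  have hempty := rk_le_ncard M (finite_empty (α := α))
  have hdual := rk_dual_add_rk_ground (subset_refl M.E)
  rw [sdiff_self] at hdual
  rw [ncard_empty] at hempty
  omega

lemma rk_restrict [M.RankFinite] (h : X ⊆ Y) : rk (M ↾ Y) X = rk M X := by
  have h := M.restrict_eRk_eq h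
  simp only [← cast_rk] at h
  exact_mod_cast h

lemma rk_image_Iio_le [M.RankFinite] {g : ℕ → α} {m : ℕ}
    (h : ∀ i < m, g (2 * i + 1) ∈ M.closure {g (2 * i), g (2 * i + 2)}) :
    rk M (g '' Iio (2 * m + 1)) ≤ m + 1 := by
  induction m with
  | zero =>
    have hset : Iio (2 * 0 + 1) = ({0} : Set ℕ) := by ext; simp
    simpa only [hset, image_singleton, ncard_singleton] using
      rk_le_ncard M (finite_singleton (g 0))
  | succ m ih =>
    have hset : g '' Iio (2 * (m + 1) + 1) =
        insert (g (2 * m + 1)) (insert (g (2 * m + 2)) (g '' Iio (2 * m + 1))) := by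
      rw [← image_insert_eq, ← image_insert_eq]
      congr 1
      ext j
      simp only [mem_Iio, mem_insert_iff]
      omega
    have hmem : g (2 * m + 1) ∈ M.closure (insert (g (2 * m + 2)) (g '' Iio (2 * m + 1))) := by
      refine M.closure_subset_closure ?_ (h m m.lt_succ_self)
      rintro _ (rfl | rfl)
      · exact mem_insert_of_mem _ ⟨2 * m, by simp, rfl⟩
      · exact mem_insert _ _
    rw [hset, rk_insert_of_mem_closure hmem]
    exact (rk_insert_le M _ _).trans (by gcongr; exact ih fun i hi ↦ h i (by omega))

end Rank

section Connectivity

variable {M : Matroid α} {X D : Set α} {a e : α} {k : ℕ}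

lemma lam_compl (hX : X ⊆ M.E) : lam M (M.E \ X) = lam M X := by
  rw [lam, lam, sdiff_sdiff_cancel_left hX]
  ring

lemma lam_eq_rk_add_rk_dual_sub_ncard [M.Finite] (hX : X ⊆ M.E) :
    lam M X = rk M X + rk M✶ X - X.ncard := by
  have h := rk_dual_add_rk_ground hX
  unfold lam
  omega

lemma lam_dual [M.Finite] (hX : X ⊆ M.E) : lam M✶ X = lam M X := by
  rw [lam_eq_rk_add_rk_dual_sub_ncard hX, lam_eq_rk_add_rk_dual_sub_ncard (M := M✶) hX, dual_dual]
  ring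

lemma lam_insert_le_of_mem_closure [M.Finite] (hX : X ⊆ M.E) (he : e ∈ M.closure X) :
    lam M (insert e X) ≤ lam M X := by
  by_cases heX : e ∈ X
  · rw [insert_eq_of_mem heX]
  have hins : insert e X ⊆ M.E := insert_subset (mem_ground_of_mem_closure he) hX
  have hrk := rk_insert_of_mem_closure he
  have hrk_dual := rk_insert_le M✶ e X
  have hcard := ncard_insert_of_notMem heX (M.ground_finite.subset hX)
  rw [lam_eq_rk_add_rk_dual_sub_ncard hX, lam_eq_rk_add_rk_dual_sub_ncard hins]
  omega

lemma lam_insert_le_of_mem_dual_closure [M.Finite] (hX : X ⊆ M.E) (he : e ∈ M✶.closure X) :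
    lam M (insert e X) ≤ lam M X := by
  have hins : insert e X ⊆ M.E := insert_subset (mem_ground_of_mem_closure (M := M✶) he) hX
  rw [← lam_dual hX, ← lam_dual hins]
  exact lam_insert_le_of_mem_closure hX he

lemma IsKSeparation.compl (h : IsKSeparation M k X) : IsKSeparation M k (M.E \ X) := by
  obtain ⟨⟨hX, hlam⟩, hcard, hcard_compl⟩ := h
  refine ⟨⟨sdiff_subset, by rwa [lam_compl hX]⟩, hcard_compl, ?_⟩
  rwa [sdiff_sdiff_cancel_left hX]

instance delete_finite [M.Finite] : (delete M D).Finite :=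
  restrict_finite (M.ground_finite.subset sdiff_subset)

lemma dual_delete_eq (M : Matroid α) (D : Set α) : (delete M D)✶ = M✶ ／ D :=
  M.dual_delete D

lemma delete_ground (M : Matroid α) (D : Set α) : (delete M D).E = M.E \ D := rfl

lemma lam_delete [M.RankFinite] (hX : X ⊆ M.E \ D) :
    lam (delete M D) X = rk M X + rk M (M.E \ (D ∪ X)) - rk M (M.E \ D) := by
  rw [lam, delete_ground, delete, rk_restrict hX, rk_restrict sdiff_subset, rk_restrict subset_rfl,
    sdiff_sdiff]

lemma lam_insert_le_lam_delete_add_one [M.RankFinite] (hX : X ⊆ M.E \ {a}) :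
    lam M (insert a X) ≤ lam (delete M {a}) X + 1 := by
  have hins := rk_insert_le M a X
  have hmono : rk M (M.E \ {a}) ≤ rk M M.E := rk_mono sdiff_subset
  rw [lam_delete hX, singleton_union, lam]
  omega

lemma lam_insert_le_lam_delete [M.RankFinite] (hX : X ⊆ M.E \ {a}) (ha : a ∈ M.closure X) :
    lam M (insert a X) ≤ lam (delete M {a}) X := by
  have hins := rk_insert_of_mem_closure ha
  have hmono : rk M (M.E \ {a}) ≤ rk M M.E := rk_mono sdiff_subset
  rw [lam_delete hX, singleton_union, lam]
  omega

end Connectivity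

section Circuit

variable {M : Matroid α} {X C T D : Set α} {e : α}

lemma circuit_iff_isCircuit : Circuit M C ↔ M.IsCircuit C := by
  rw [isCircuit_iff_forall_ssubset, Dep, Circuit]
  tauto

lemma Circuit.mem_closure (hC : Circuit M C) (he : e ∈ C) (hX : C \ {e} ⊆ X) :
    e ∈ M.closure X :=
  M.closure_subset_closure hX
    ((circuit_iff_isCircuit.1 hC).mem_closure_sdiff_singleton_of_mem he)

lemma Circuit.inter_cocircuit_ne_singleton (hC : Circuit M C) (hD : Cocircuit M D) :
    C ∩ D ≠ {e} :=
  (circuit_iff_isCircuit.1 hC).inter_isCocircuit_ne_singleton (circuit_iff_isCircuit.1 hD)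

lemma triangle_dual_iff : Triangle M✶ T ↔ Triad M T := Iff.rfl

lemma triad_dual_iff : Triad M✶ T ↔ Triangle M T := by
  rw [← triangle_dual_iff, dual_dual]

lemma Triangle.rk_eq_two [M.Finite] (hT : Triangle M T) : rk M T = 2 := by
  have h := (circuit_iff_isCircuit.1 hT.1).eRk_add_one_eq
  rw [← (M.ground_finite.subset hT.1.1).cast_ncard_eq, hT.2, ← cast_rk] at h
  have h3 : rk M T + 1 = 3 := by exact_mod_cast h
  omega

lemma Triad.rk_dual_eq_two [M.Finite] (hD : Triad M D) : rk M✶ D = 2 :=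
  Triangle.rk_eq_two (triangle_dual_iff.2 hD)

end Circuit

section ThreeConnected

variable {M : Matroid α} {X T D : Set α} {a b c d : α} {k : ℕ}

lemma ThreeConnected.dual [M.Finite] (hM : ThreeConnected M) : ThreeConnected M✶ := by
  rintro k hk X ⟨⟨hX, hlam⟩, hcard, hcard_compl⟩
  exact hM k hk X ⟨⟨hX, (lam_dual (M := M) hX).ge.trans hlam⟩, hcard, hcard_compl⟩

lemma ThreeConnected.le_lam (hM : ThreeConnected M) (hk : k < 3) (hX : X ⊆ M.E)
    (hcard : k ≤ X.ncard) (hcard_compl : k ≤ (M.E \ X).ncard) : k ≤ lam M X := by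
  by_contra! hlt
  exact hM k hk X ⟨⟨hX, by omega⟩, hcard, hcard_compl⟩

lemma ThreeConnected.ncard_compl_lt (hM : ThreeConnected M) (hk : k < 3) (hX : X ⊆ M.E)
    (hcard : k ≤ X.ncard) (hlam : lam M X < k) : (M.E \ X).ncard < k := by
  by_contra! hle
  exact hlam.not_ge (hM.le_lam hk hX hcard hle)

lemma ThreeConnected.indep_of_ncard_le_two [M.Finite] (hM : ThreeConnected M)
    (hE : 4 ≤ M.E.ncard) (hX : X ⊆ M.E) (hcard : X.ncard ≤ 2) : M.Indep X := by
  have hXfin := M.ground_finite.subset hX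
  have htotal := ncard_sdiff_add_ncard_of_subset hX M.ground_finite
  have hlam := hM.le_lam (by omega) hX le_rfl (by omega)
  have hmono : rk M (M.E \ X) ≤ rk M M.E := rk_mono sdiff_subset
  have hle := rk_le_ncard M hXfin
  rw [indep_iff_rk_eq_ncard hXfin]
  unfold lam at hlam
  omega

lemma ThreeConnected.triangle_of_rk_le_two [M.Finite] (hM : ThreeConnected M)
    (hE : 4 ≤ M.E.ncard) (hT : T ⊆ M.E) (hcard : T.ncard = 3) (hrk : rk M T ≤ 2) :
    Triangle M T := by
  have hfin := M.ground_finite.subset hT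
  refine ⟨⟨hT, ?_, fun X hX ↦ ?_⟩, hcard⟩
  · rw [indep_iff_rk_eq_ncard hfin]
    omega
  · have hlt := ncard_lt_ncard hX hfin
    exact hM.indep_of_ncard_le_two hE (hX.subset.trans hT) (by omega)

lemma ThreeConnected.triad_of_rk_dual_le_two [M.Finite] (hM : ThreeConnected M)
    (hE : 4 ≤ M.E.ncard) (hD : D ⊆ M.E) (hcard : D.ncard = 3) (hrk : rk M✶ D ≤ 2) :
    Triad M D :=
  triangle_dual_iff.1 (hM.dual.triangle_of_rk_le_two hE hD hcard hrk)

lemma ThreeConnected.three_le_rk_of_triad [M.Finite] (hM : ThreeConnected M)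
    (hE : 5 ≤ M.E.ncard) (hD : Triad M D) : 3 ≤ rk M D := by
  have hDE : D ⊆ M.E := hD.1.1
  have hcard := hD.2
  have htotal := ncard_sdiff_add_ncard_of_subset hDE M.ground_finite
  have hlam := hM.le_lam (k := 2) (by omega) hDE (by omega) (by omega)
  rw [lam_eq_rk_add_rk_dual_sub_ncard hDE, hD.rk_dual_eq_two] at hlam
  omega

lemma ThreeConnected.not_triangle_of_triad [M.Finite] (hM : ThreeConnected M)
    (hE : 5 ≤ M.E.ncard) (hD : Triad M D) : ¬ Triangle M D := fun hT ↦ by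
  have h := hM.three_le_rk_of_triad hE hD
  rw [hT.rk_eq_two] at h
  omega

lemma ThreeConnected.not_isKSeparation_two_delete [M.Finite] (hM : ThreeConnected M)
    (ha : a ∈ M.closure X) : ¬ IsKSeparation (delete M {a}) 2 X := by
  rintro ⟨⟨hX, hlam⟩, hcard, hcard_compl⟩
  rw [delete_ground] at hX hcard_compl
  have haE : a ∈ M.E := mem_ground_of_mem_closure ha
  have hins : insert a X ⊆ M.E := insert_subset haE (hX.trans sdiff_subset)
  have hle := lam_insert_le_lam_delete hX ha
  have hcard_ins := ncard_le_ncard (subset_insert a X) (M.ground_finite.subset hins)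
  have hlt := hM.ncard_compl_lt (k := 2) (by omega) hins (by omega) (by omega)
  rw [sdiff_sdiff, singleton_union] at hcard_compl
  omega

lemma ThreeConnected.exists_isKSeparation_two_delete [M.Finite] (hM : ThreeConnected M)
    (hE : 4 ≤ M.E.ncard) (ha : a ∈ M.E) (hnot : ¬ ThreeConnected (delete M {a})) :
    ∃ X, IsKSeparation (delete M {a}) 2 X := by
  unfold ThreeConnected at hnot
  push Not at hnot
  obtain ⟨k, hk, X, hsep⟩ := hnot
  have ncard_compl_le (hk1 : k ≤ 1) {Y : Set α} (hY : IsKSeparation (delete M {a}) k Y) :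
      (M.E \ insert a Y).ncard ≤ k := by
    obtain ⟨⟨hYE, hlam⟩, hcard, -⟩ := hY
    rw [delete_ground] at hYE
    have hins : insert a Y ⊆ M.E := insert_subset ha (hYE.trans sdiff_subset)
    have haY : a ∉ Y := fun h ↦ (hYE h).2 rfl
    have hcard_ins := ncard_insert_of_notMem haY (M.ground_finite.subset (hYE.trans sdiff_subset))
    have hle := lam_insert_le_lam_delete_add_one hYE
    have hlt := hM.ncard_compl_lt (k := k + 1) (by omega) hins (by omega) (by push_cast; omega)
    omega
  obtain rfl | hk1 : k = 2 ∨ k ≤ 1 := by omega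
  · exact ⟨X, hsep⟩
  have hX : X ⊆ M.E \ {a} := hsep.1.1
  have hcard := ncard_compl_le hk1 hsep
  have hcard_compl := ncard_compl_le hk1 hsep.compl
  rw [← singleton_union, ← sdiff_sdiff] at hcard hcard_compl
  rw [delete_ground, sdiff_sdiff_cancel_left hX] at hcard_compl
  have htotal := ncard_sdiff_add_ncard_of_subset hX (M.ground_finite.subset sdiff_subset)
  have htotal_a := ncard_sdiff_singleton_add_one ha M.ground_finite
  omega

lemma ThreeConnected.triad_insert_of_isKSeparation_delete [M.Finite] (hM : ThreeConnected M)
    (hE : 4 ≤ M.E.ncard) (ha : a ∈ M.E) (hX : IsKSeparation (delete M {a}) 2 X)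
    (hcard : X.ncard = 2) : Triad M (insert a X) := by
  obtain ⟨⟨hXE, hlam⟩, -, -⟩ := hX
  rw [delete_ground] at hXE
  have haX : a ∉ X := fun h ↦ (hXE h).2 rfl
  have hXM : X ⊆ M.E := hXE.trans sdiff_subset
  have hXfin := M.ground_finite.subset hXM
  have hins : insert a X ⊆ M.E := insert_subset ha hXM
  have hcard_ins := ncard_insert_of_notMem haX hXfin
  have hrk := (indep_iff_rk_eq_ncard hXfin).1 (hM.indep_of_ncard_le_two hE hXM hcard.le)
  have hdual := rk_dual_add_rk_ground hins
  have hmono : rk M (M.E \ {a}) ≤ rk M M.E := rk_mono sdiff_subset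
  rw [lam_delete hXE, singleton_union] at hlam
  exact hM.triad_of_rk_dual_le_two hE hins (by omega) (by omega)

lemma ThreeConnected.exists_triad_of_isKSeparation_delete [M.Finite] (hM : ThreeConnected M)
    (hE : 4 ≤ M.E.ncard) (hX : IsKSeparation (delete M {a}) 2 X)
    (hc : c ∈ (M.E \ {a}) \ X) (ha : a ∈ M.closure (insert c X))
    (hc_cl : c ∈ M✶.closure (insert a X)) :
    ∃ g ∈ M.E \ insert a (insert c X), Triad M {g, a, c} := by
  have haE : a ∈ M.E := mem_ground_of_mem_closure ha
  have hXE : X ⊆ M.E \ {a} := hX.1.1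
  have hcXE : insert c X ⊆ M.E \ {a} := insert_subset hc.1 hXE
  have hins : insert a (insert c X) ⊆ M.E := insert_subset haE (hcXE.trans sdiff_subset)
  -- Moving `c` across the separation does not increase `λ`, and then `a` can be put back for free.
  have hlam : lam M (insert a (insert c X)) ≤ 1 := by
    have hc' : c ∈ (delete M {a})✶.closure X := by
      rw [dual_delete_eq, contract_closure_eq, union_singleton]
      exact ⟨hc_cl, hc.1.2⟩
    calc lam M (insert a (insert c X)) ≤ lam (delete M {a}) (insert c X) :=
          lam_insert_le_lam_delete hcXE ha
      _ ≤ lam (delete M {a}) X := lam_insert_le_of_mem_dual_closure hXE hc'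
      _ ≤ 1 := hX.1.2
  have hcard_ins : 2 ≤ (insert a (insert c X)).ncard :=
    hX.2.1.trans (ncard_le_ncard (by grind) (M.ground_finite.subset hins))
  have hlt := hM.ncard_compl_lt (k := 2) (by omega) hins hcard_ins (by omega)
  set Y := (M.E \ {a}) \ X with hY
  have hcompl : M.E \ insert a (insert c X) = Y \ {c} := by grind
  have hYfin : Y.Finite := M.ground_finite.subset (sdiff_subset.trans sdiff_subset)
  have hcardY : 2 ≤ Y.ncard := hX.2.2
  have hYc := ncard_sdiff_singleton_add_one hc hYfin
  obtain ⟨g, hg⟩ := ncard_eq_one.1 (show (Y \ {c}).ncard = 1 by rw [hcompl] at hlt; omega)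
  have htriad := hM.triad_insert_of_isKSeparation_delete hE haE hX.compl
    (show Y.ncard = 2 by rw [hcompl] at hlt; omega)
  have hset : insert a Y = {g, a, c} := by
    rw [← insert_sdiff_self_of_mem hc, hg]
    grind
  exact ⟨g, hcompl.trans hg |>.ge rfl, hset ▸ htriad⟩

lemma ThreeConnected.exists_triad_of_not_threeConnected_delete [M.Finite] (hM : ThreeConnected M)
    (hE : 4 ≤ M.E.ncard) (hT : Triangle M {a, b, c}) (hD : Triad M {b, c, d})
    (hab : a ≠ b) (hac : a ≠ c) (had : a ≠ d) (hnot : ¬ ThreeConnected (delete M {a})) :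
    ∃ g ∉ ({a, b, c, d} : Set α), Triad M {g, a, b} ∨ Triad M {g, a, c} := by
  obtain ⟨X, hX⟩ := hM.exists_isKSeparation_two_delete hE (hT.1.1 (by simp)) hnot
  have hbE : b ∈ M.E \ {a} := ⟨hT.1.1 (by simp), hab.symm⟩
  have hcE : c ∈ M.E \ {a} := ⟨hT.1.1 (by simp), hac.symm⟩
  have hdE : d ∈ M.E \ {a} := ⟨hD.1.1 (by simp), had.symm⟩
  wlog hbX : b ∈ X generalizing X
  · exact this _ hX.compl ⟨hbE, hbX⟩
  have hcX : c ∉ X := fun hcX ↦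
    hM.not_isKSeparation_two_delete (hT.1.mem_closure (by simp) (by grind)) hX
  by_cases hdX : d ∈ X
  · obtain ⟨g, hg, hgD⟩ := hM.exists_triad_of_isKSeparation_delete hE hX ⟨hcE, hcX⟩
      (hT.1.mem_closure (by simp) (by grind)) (Circuit.mem_closure hD.1 (by simp) (by grind))
    exact ⟨g, by grind, .inr hgD⟩
  · obtain ⟨g, hg, hgD⟩ := hM.exists_triad_of_isKSeparation_delete hE hX.compl
      (c := b) (by grind [delete_ground])
      (hT.1.mem_closure (by simp) (by grind [delete_ground]))
      (Circuit.mem_closure hD.1 (by simp) (by grind [delete_ground]))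
    exact ⟨g, by grind [delete_ground], .inl hgD⟩

end ThreeConnected

section FanOrder

variable {M : Matroid α} {f : ℕ → α} {g : α} {i j k m n : ℕ}

lemma image_Iio_add_one (f : ℕ → α) (m : ℕ) :
    f '' Iio (m + 1) = insert (f 0) ((fun i ↦ f (i + 1)) '' Iio m) := by
  ext x
  constructor
  · rintro ⟨_ | i, hi, rfl⟩
    · exact mem_insert _ _
    · exact mem_insert_of_mem _ ⟨i, Nat.lt_of_succ_lt_succ hi, rfl⟩
  · rintro (rfl | ⟨i, hi, rfl⟩)
    · exact ⟨0, m.succ_pos, rfl⟩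
    · exact ⟨i + 1, Nat.succ_lt_succ hi, rfl⟩

lemma IsFanOrd.ne (hf : IsFanOrd M k f) (hi : i < k) (hj : j < k) (hij : i ≠ j) : f i ≠ f j :=
  hf.2.1.ne hi hj hij

lemma IsFanOrd.image_Iio_subset_ground (hf : IsFanOrd M k f) (hm : m ≤ k) :
    f '' Iio m ⊆ M.E :=
  image_subset_iff.2 fun _ hi ↦ hf.2.2.1 _ (lt_of_lt_of_le hi hm)

lemma IsFanOrd.ncard_image_Iio (hf : IsFanOrd M k f) (hm : m ≤ k) : (f '' Iio m).ncard = m := by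
  rw [(hf.2.1.mono (Iio_subset_Iio hm)).ncard_image, ncard_eq_toFinset_card', toFinset_Iio,
    Nat.card_Iio]

lemma IsFanOrd.le_ncard_ground [M.Finite] (hf : IsFanOrd M k f) : k ≤ M.E.ncard := by
  conv_lhs => rw [← hf.ncard_image_Iio le_rfl]
  exact ncard_le_ncard (hf.image_Iio_subset_ground le_rfl) M.ground_finite

lemma IsFanOrd.triangle_two_mul (hf : IsFanOrd M k f) (hT : Triangle M {f 0, f 1, f 2})
    (hi : 2 * i + 2 < k) : Triangle M {f (2 * i), f (2 * i + 1), f (2 * i + 2)} := by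
  induction i with
  | zero => exact hT
  | succ i ih =>
    have hD := (hf.2.2.2.2 (2 * i) (by omega)).1 (ih (by omega))
    exact (hf.2.2.2.2 (2 * i + 1) (by omega)).2 hD

lemma IsFanOrd.triad_two_mul_add_one (hf : IsFanOrd M k f) (hT : Triangle M {f 0, f 1, f 2})
    (hi : 2 * i + 3 < k) : Triad M {f (2 * i + 1), f (2 * i + 2), f (2 * i + 3)} :=
  (hf.2.2.2.2 (2 * i) hi).1 (hf.triangle_two_mul hT (by omega))

lemma IsFanOrd.rk_image_Iio_le [M.RankFinite] (hf : IsFanOrd M k f)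
    (hT : Triangle M {f 0, f 1, f 2}) (hm : 2 * m < k) : rk M (f '' Iio (2 * m + 1)) ≤ m + 1 := by
  refine NDP.rk_image_Iio_le fun i hi ↦ ?_
  exact (hf.triangle_two_mul hT (i := i) (by omega)).1.mem_closure (by simp) (by grind)

lemma IsFanOrd.rk_dual_image_Iio_le [M✶.RankFinite] (hf : IsFanOrd M k f)
    (hT : Triangle M {f 0, f 1, f 2}) (hm : 2 * m + 1 < k) :
    rk M✶ ((fun i ↦ f (i + 1)) '' Iio (2 * m + 1)) ≤ m + 1 := by
  refine NDP.rk_image_Iio_le fun i hi ↦ ?_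
  exact Circuit.mem_closure (hf.triad_two_mul_add_one hT (i := i) (by omega)).1 (by simp)
    (by grind)

lemma IsFanOrd.isFan_insert (hf : IsFanOrd M k f) (hT : Triangle M {f 0, f 1, f 2})
    (hg : g ∉ f '' Iio k) (hD : Triad M {g, f 0, f 1}) (hnot : ¬ Triangle M {g, f 0, f 1}) :
    IsFan M (insert g (f '' Iio k)) := by
  let f' : ℕ → α
    | 0 => g
    | i + 1 => f i
  have hgE : g ∈ M.E := hD.1.1 (mem_insert _ _)
  refine ⟨k + 1, f', ⟨hf.1.trans k.le_succ, ?_, ?_, .inr hD, ?_⟩, (image_Iio_add_one f' k).symm⟩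
  · rintro (_ | i) hi (_ | j) hj hij
    · rfl
    · exact (hg ⟨j, Nat.lt_of_succ_lt_succ hj, hij.symm⟩).elim
    · exact (hg ⟨i, Nat.lt_of_succ_lt_succ hi, hij⟩).elim
    · rw [hf.2.1 (Nat.lt_of_succ_lt_succ hi) (Nat.lt_of_succ_lt_succ hj) hij]
  · rintro (_ | i) hi
    · exact hgE
    · exact hf.2.2.1 i (Nat.lt_of_succ_lt_succ hi)
  · rintro (_ | i) hi
    · exact ⟨fun h ↦ (hnot h).elim, fun _ ↦ hT⟩
    · exact hf.2.2.2.2 i (Nat.lt_of_succ_lt_succ hi)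

lemma IsFanOrd.comp_swap (hf : IsFanOrd M 4 f) : IsFanOrd M 4 (f ∘ Equiv.swap 1 2) := by
  have hbij : BijOn (Equiv.swap 1 2) (Iio 4) (Iio 4) := Equiv.swap_bijOn_self (by simp)
  have h0 : Equiv.swap 1 2 0 = 0 := by decide
  have h3 : Equiv.swap 1 2 3 = 3 := by decide
  refine ⟨hf.1, hf.2.1.comp hbij.injOn hbij.mapsTo, fun i hi ↦ hf.2.2.1 _ (hbij.mapsTo hi), ?_⟩
  refine ⟨?_, fun i hi ↦ ?_⟩
  · simpa [h0, pair_comm (f 2)] using hf.2.2.2.1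
  · obtain rfl : i = 0 := by omega
    simpa [h0, h3, pair_comm (f 2), insert_comm (f 2)] using hf.2.2.2.2 0 hi

lemma image_comp_swap_Iio_four (f : ℕ → α) : (f ∘ Equiv.swap 1 2) '' Iio 4 = f '' Iio 4 := by
  rw [image_comp, (Equiv.swap_bijOn_self (by simp)).image_eq]

end FanOrder

section Wheel

variable {M : Matroid α} {f : ℕ → α} {j k n : ℕ}

lemma injective_ite_two_mul_val : Function.Injective
    fun p : ZMod (n + 1) × Bool ↦ if p.2 then 2 * p.1.val else 2 * p.1.val + 1 := by
  rintro ⟨i, _ | _⟩ ⟨j, _ | _⟩ h <;>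
    simp only [Bool.false_eq_true, if_true, if_false] at h <;> first
    | omega
    | rw [ZMod.val_injective (n + 1) (by omega : i.val = j.val)]

lemma range_two_mul_val_union_range_two_mul_val_add_one (f : ℕ → α) :
    (range fun i : ZMod (n + 1) ↦ f (2 * i.val)) ∪
      (range fun i : ZMod (n + 1) ↦ f (2 * i.val + 1)) = f '' Iio (2 * n + 2) := by
  refine subset_antisymm (union_subset ?_ ?_) ?_
  · rintro _ ⟨i, rfl⟩
    have hi := i.val_lt
    exact ⟨2 * i.val, by rw [mem_Iio]; omega, rfl⟩
  · rintro _ ⟨i, rfl⟩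
    have hi := i.val_lt
    exact ⟨2 * i.val + 1, by rw [mem_Iio]; omega, rfl⟩
  · rintro _ ⟨j, hj, rfl⟩
    rw [mem_Iio] at hj
    have hval : ((j / 2 : ℕ) : ZMod (n + 1)).val = j / 2 := ZMod.val_cast_of_lt (by omega)
    obtain hj | hj := j.even_or_odd
    · exact .inl ⟨(j / 2 : ℕ), by simp only [hval, Nat.two_mul_div_two_of_even hj]⟩
    · exact .inr ⟨(j / 2 : ℕ), by simp only [hval, Nat.two_mul_div_two_add_one_of_odd hj]⟩

lemma IsFanOrd.isWheelOrWhirl (hf : IsFanOrd M (2 * n + 2) f) (hn : 1 ≤ n)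
    (hE : f '' Iio (2 * n + 2) = M.E) (hT : Triangle M {f 0, f 1, f 2})
    (hT_last : Triangle M {f (2 * n), f (2 * n + 1), f 0})
    (hD_last : Triad M {f (2 * n + 1), f 0, f 1}) : IsWheelOrWhirl M := by
  refine ⟨n + 1, fun i ↦ f (2 * i.val), fun i ↦ f (2 * i.val + 1), by omega, ?_,
    (range_two_mul_val_union_range_two_mul_val_add_one f).trans hE, fun i ↦ ?_⟩
  · have hlt (p : ZMod (n + 1) × Bool) :
        (if p.2 then 2 * p.1.val else 2 * p.1.val + 1) ∈ Iio (2 * n + 2) := by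
      have hp := p.1.val_lt
      rw [mem_Iio]
      split_ifs <;> omega
    intro p q hpq
    simp only [← apply_ite f] at hpq
    exact injective_ite_two_mul_val (hf.2.1 (hlt p) (hlt q) hpq)
  · obtain hi | hi := Nat.lt_succ_iff_lt_or_eq.1 i.val_lt
    · have hone : (1 : ZMod (n + 1)).val = 1 := ZMod.val_one'' (by omega)
      have hval : (i + 1).val = i.val + 1 := by rw [ZMod.val_add_of_lt (by omega), hone]
      simp only [hval]
      exact ⟨hf.triangle_two_mul hT (by omega), hf.triad_two_mul_add_one hT (by omega)⟩
    · obtain rfl : i = -1 := ZMod.val_injective _ (by rw [hi, ZMod.val_neg_one])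
      simp only [neg_add_cancel, ZMod.val_zero, hi]
      exact ⟨hT_last, hD_last⟩

lemma IsFanOrd.add_one_eq_and_even_of_triad (hf : IsFanOrd M k f) (hT : Triangle M {f 0, f 1, f 2})
    (hj : 4 ≤ j) (hjk : j < k) (hD : Triad M {f j, f 0, f 1}) : j + 1 = k ∧ Even k := by
  have hmiss (i : ℕ) (hi : 1 ≤ i) (hik : 2 * i + 2 < k) :
      j ≠ 2 * i ∧ j ≠ 2 * i + 1 ∧ j ≠ 2 * i + 2 := by
    have hinter := (hf.triangle_two_mul hT hik).1.inter_cocircuit_ne_singleton (e := f j) hD.1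
    have hne (l : ℕ) (hl : 2 ≤ l) (hlk : l < k) : f l ≠ f 0 ∧ f l ≠ f 1 :=
      ⟨hf.ne hlk (by omega) (by omega), hf.ne hlk (by omega) (by omega)⟩
    have h1 := hne (2 * i) (by omega) (by omega)
    have h2 := hne (2 * i + 1) (by omega) (by omega)
    have h3 := hne (2 * i + 2) (by omega) (by omega)
    grind
  rw [Nat.even_iff]
  have h1 := hmiss (j / 2 - 1) (by omega)
  have h2 := hmiss (j / 2) (by omega)
  omega

lemma IsFanOrd.image_Iio_eq_ground_of_triad [M.Finite] (hM : ThreeConnected M)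
    (hf : IsFanOrd M (2 * n + 2) f) (hn : 1 ≤ n) (hT : Triangle M {f 0, f 1, f 2})
    (hD : Triad M {f (2 * n + 1), f 0, f 1}) : f '' Iio (2 * n + 2) = M.E := by
  have hset := image_Iio_add_one f (2 * n + 1)
  have hsub := hf.image_Iio_subset_ground le_rfl
  have hX : f '' Iio (2 * n + 1) ⊆ M.E := hf.image_Iio_subset_ground (by omega)
  have hcard := hf.ncard_image_Iio (m := 2 * n + 1) (by omega)
  have hcard_all := hf.ncard_image_Iio le_rfl
  have hrk := hf.rk_image_Iio_le hT (m := n) (by omega)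
  have hrk_dual : rk M✶ (f '' Iio (2 * n + 2)) ≤ n + 1 := by
    rw [hset, rk_insert_of_mem_closure]
    · exact hf.rk_dual_image_Iio_le hT (by omega)
    · refine Circuit.mem_closure hD.1 (by simp) ?_
      rintro x ⟨rfl | rfl | rfl, hx⟩
      · exact ⟨2 * n, by simp, rfl⟩
      · exact (hx rfl).elim
      · exact ⟨0, by simp, rfl⟩
  have hmono : rk M✶ (f '' Iio (2 * n + 1)) ≤ rk M✶ (f '' Iio (2 * n + 2)) :=
    rk_mono (image_mono (Iio_subset_Iio (by omega)))
  have hlam : lam M (f '' Iio (2 * n + 1)) ≤ 1 := by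
    rw [lam_eq_rk_add_rk_dual_sub_ncard hX]
    omega
  have hlt := hM.ncard_compl_lt (k := 2) (by omega) hX (by omega) (by omega)
  have htotal := ncard_sdiff_add_ncard_of_subset hX M.ground_finite
  exact eq_of_subset_of_ncard_le hsub (by omega) M.ground_finite

lemma IsFanOrd.rk_ground_le_of_image_Iio_eq [M.Finite] (hM : ThreeConnected M)
    (hf : IsFanOrd M (2 * n + 2) f) (hn : 1 ≤ n) (hE : f '' Iio (2 * n + 2) = M.E)
    (hT : Triangle M {f 0, f 1, f 2}) : rk M M.E ≤ n + 1 := by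
  let x := f (2 * n + 1)
  have hxE : {x} ⊆ M.E := singleton_subset_iff.2 (hf.2.2.1 _ (by omega))
  have hcardE : 4 ≤ M✶.E.ncard := le_trans (by omega) hf.le_ncard_ground
  have hindep : M✶.Indep {x} := hM.dual.indep_of_ncard_le_two hcardE hxE (by simp)
  have hrk_dual := (indep_iff_rk_eq_ncard (finite_singleton x)).1 hindep
  have hdual := rk_dual_add_rk_ground hxE
  have hsub : M.E \ {x} ⊆ f '' Iio (2 * n + 1) := by
    rw [← hE]
    rintro _ ⟨⟨i, hi, rfl⟩, hix⟩
    exact ⟨i, lt_of_le_of_ne (Nat.le_of_lt_succ hi) fun h ↦ hix (h ▸ rfl), rfl⟩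
  have hmono : rk M (M.E \ {x}) ≤ rk M (f '' Iio (2 * n + 1)) := rk_mono hsub
  have hrk := hf.rk_image_Iio_le hT (m := n) (by omega)
  omega

lemma IsFanOrd.triangle_last_of_image_Iio_eq [M.Finite] (hM : ThreeConnected M)
    (hf : IsFanOrd M (2 * n + 2) f) (hn : 1 ≤ n) (hE : f '' Iio (2 * n + 2) = M.E)
    (hT : Triangle M {f 0, f 1, f 2}) :
    Triangle M {f (2 * n), f (2 * n + 1), f 0} := by
  have hcardE : M.E.ncard = 2 * n + 2 := hE ▸ hf.ncard_image_Iio le_rfl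
  set T : Set α := {f (2 * n), f (2 * n + 1), f 0} with hT_eq
  have hTE : T ⊆ M.E := by
    rintro _ (rfl | rfl | rfl) <;> exact hf.2.2.1 _ (by omega)
  have hcard : T.ncard = 3 :=
    ncard_eq_three.2 ⟨_, _, _, hf.ne (by omega) (by omega) (by omega),
      hf.ne (by omega) (by omega) (by omega), hf.ne (by omega) (by omega) (by omega), rfl⟩
  have hsub : M.E \ T ⊆ (fun i ↦ f (i + 1)) '' Iio (2 * (n - 1) + 1) := by
    rw [← hE]
    rintro _ ⟨⟨i, hi, rfl⟩, hiT⟩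
    have h0 : i ≠ 0 := by rintro rfl; simp [hT_eq] at hiT
    have h1 : i ≠ 2 * n := by rintro rfl; simp [hT_eq] at hiT
    have h2 : i ≠ 2 * n + 1 := by rintro rfl; simp [hT_eq] at hiT
    rw [mem_Iio] at hi
    exact ⟨i - 1, by rw [mem_Iio]; omega, by simp only [Nat.sub_add_cancel (Nat.pos_of_ne_zero h0)]⟩
  have hmono : rk M✶ (M.E \ T) ≤ rk M✶ _ := rk_mono hsub
  have hrk_dual := hf.rk_dual_image_Iio_le hT (m := n - 1) (by omega)
  have hrk := hf.rk_ground_le_of_image_Iio_eq hM hn hE hT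
  have hsum := rk_dual_ground_add_rk_ground M
  have hdual := rk_dual_add_rk_ground (M := M✶) hTE
  rw [dual_dual, dual_ground] at hdual
  exact hM.triangle_of_rk_le_two (by omega) hTE hcard (by omega)

lemma IsFanOrd.isWheelOrWhirl_of_triad [M.Finite] (hM : ThreeConnected M) (hf : IsFanOrd M k f)
    (hT : Triangle M {f 0, f 1, f 2}) (hj : 4 ≤ j) (hjk : j < k) (hD : Triad M {f j, f 0, f 1}) :
    IsWheelOrWhirl M := by
  obtain ⟨rfl, hk⟩ := hf.add_one_eq_and_even_of_triad hT hj hjk hD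
  obtain ⟨n, rfl⟩ : ∃ n, j = 2 * n + 1 := by
    obtain ⟨n, hn⟩ := hk
    exact ⟨n - 1, by omega⟩
  have hn : 1 ≤ n := by omega
  have hE := hf.image_Iio_eq_ground_of_triad hM hn hT hD
  exact hf.isWheelOrWhirl hn hE hT (hf.triangle_last_of_image_Iio_eq hM hn hE hT) hD

end Wheel

section MaximalFan

variable {M : Matroid α} {f : ℕ → α} {g : α} {k : ℕ}

lemma image_Iio_five (f : ℕ → α) :
    f '' Iio 5 = insert (f 0) (insert (f 1) {f 2, f 3, f 4}) := by
  have hset : Iio 5 = ({0, 1, 2, 3, 4} : Set ℕ) := by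
    ext i
    simp only [mem_Iio, mem_insert_iff, mem_singleton_iff]
    omega
  simp only [hset, image_insert_eq, image_singleton]

lemma IsFanOrd.lam_image_Iio_five_le [M.Finite] (hf : IsFanOrd M k f) (hk : 5 ≤ k)
    (hT : Triangle M {f 0, f 1, f 2}) (hD : Triad M {f 4, f 0, f 2}) : lam M (f '' Iio 5) ≤ 1 := by
  have hX := hf.image_Iio_subset_ground hk
  have hrk : rk M (f '' Iio 5) ≤ 3 := hf.rk_image_Iio_le hT (m := 2) (by omega)
  have hT₂ : Triangle M {f 2, f 3, f 4} := hf.triangle_two_mul hT (i := 1) (by omega)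
  have hspan : f 1 ∈ M✶.closure {f 2, f 3, f 4} :=
    Circuit.mem_closure (hf.triad_two_mul_add_one hT (i := 0) (by omega)).1 (by simp) (by grind)
  have hspan' : f 0 ∈ M✶.closure (insert (f 1) {f 2, f 3, f 4}) :=
    Circuit.mem_closure hD.1 (by simp) (by grind)
  have hrk_dual : rk M✶ (f '' Iio 5) ≤ 3 := by
    rw [image_Iio_five, rk_insert_of_mem_closure hspan', rk_insert_of_mem_closure hspan]
    exact (rk_le_ncard M✶ (toFinite _)).trans hT₂.2.le
  rw [lam_eq_rk_add_rk_dual_sub_ncard hX, hf.ncard_image_Iio hk]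
  omega

lemma IsFanOrd.three_le_rk_ground [M.Finite] (hM : ThreeConnected M) (hf : IsFanOrd M k f)
    (hk : 5 ≤ k) (hT : Triangle M {f 0, f 1, f 2}) : 3 ≤ rk M M.E := by
  have hD₁ : Triad M {f 1, f 2, f 3} := hf.triad_two_mul_add_one hT (i := 0) (by omega)
  exact (hM.three_le_rk_of_triad (hk.trans hf.le_ncard_ground) hD₁).trans (rk_mono hD₁.1.1)

lemma IsFanOrd.three_le_rk_dual_ground [M.Finite] (hM : ThreeConnected M) (hf : IsFanOrd M k f)
    (hk : 5 ≤ k) (hT : Triangle M {f 0, f 1, f 2}) : 3 ≤ rk M✶ M.E := by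
  have hE : 5 ≤ M✶.E.ncard := hk.trans hf.le_ncard_ground
  exact (hM.dual.three_le_rk_of_triad hE (triad_dual_iff.2 hT)).trans (rk_mono hT.1.1)

lemma IsFanOrd.ncard_ground_eq_six [M.Finite] (hM : ThreeConnected M) (hf : IsFanOrd M k f)
    (hk : 5 ≤ k) (hT : Triangle M {f 0, f 1, f 2}) (hD : Triad M {f 4, f 0, f 2}) :
    M.E.ncard = 6 := by
  have hX := hf.image_Iio_subset_ground hk
  have hcard := hf.ncard_image_Iio hk
  have hlam := hf.lam_image_Iio_five_le hk hT hD
  have hlt := hM.ncard_compl_lt (k := 2) (by omega) hX (by omega) (by omega)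
  have htotal := ncard_sdiff_add_ncard_of_subset hX M.ground_finite
  have hsum := rk_dual_ground_add_rk_ground M
  have hrk := hf.three_le_rk_ground hM hk hT
  have hrk_dual := hf.three_le_rk_dual_ground hM hk hT
  omega

lemma IsFanOrd.exists_triad_zero_one [M.Finite] (hM : ThreeConnected M) (hf : IsFanOrd M k f)
    (hk : 5 ≤ k) (hT : Triangle M {f 0, f 1, f 2}) (hD : Triad M {f 4, f 0, f 2}) :
    ∃ e ∉ f '' Iio 5, Triad M {e, f 0, f 1} := by
  have hX := hf.image_Iio_subset_ground hk
  have hcardX := hf.ncard_image_Iio hk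
  have hcardE := hf.ncard_ground_eq_six hM hk hT hD
  have htotal := ncard_sdiff_add_ncard_of_subset hX M.ground_finite
  have hrk := hf.three_le_rk_ground hM hk hT
  have hT₂ : Triangle M {f 2, f 3, f 4} := hf.triangle_two_mul hT (i := 1) (by omega)
  obtain ⟨e, he⟩ := ncard_eq_one.1 (show (M.E \ f '' Iio 5).ncard = 1 by omega)
  have heE : e ∈ M.E \ f '' Iio 5 := he.ge rfl
  refine ⟨e, heE.2, ?_⟩
  have hZ : M.E \ {f 2, f 3, f 4} = {e, f 0, f 1} := by
    have hE_eq : M.E = insert e (f '' Iio 5) := by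
      rw [← singleton_union, ← he, sdiff_union_of_subset hX]
    have hne (i : ℕ) (hi : 2 ≤ i) (hik : i < 5) : f i ≠ e ∧ f i ≠ f 0 ∧ f i ≠ f 1 :=
      ⟨fun h ↦ heE.2 ⟨i, hik, h⟩, hf.ne (by omega) (by omega) (by omega),
        hf.ne (by omega) (by omega) (by omega)⟩
    rw [hE_eq, image_Iio_five]
    grind
  have hZE : {e, f 0, f 1} ⊆ M.E := hZ ▸ sdiff_subset
  have hcardZ := ncard_sdiff_add_ncard_of_subset hT₂.1.1 M.ground_finite
  rw [hZ, hT₂.2] at hcardZ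
  have hdual := rk_dual_add_rk_ground hZE
  rw [← hZ, sdiff_sdiff_cancel_left hT₂.1.1, hT₂.rk_eq_two, hZ] at hdual
  exact hM.triad_of_rk_dual_le_two (by omega) hZE (by omega) (by omega)

lemma IsMaximalFan.isWheelOrWhirl_of_triad_zero_one [M.Finite] (hM : ThreeConnected M)
    (hmax : IsMaximalFan M (f '' Iio k)) (hf : IsFanOrd M k f) (hk : 4 ≤ k)
    (hT : Triangle M {f 0, f 1, f 2}) (hg : g ∉ f '' Iio 4) (hD : Triad M {g, f 0, f 1}) :
    IsWheelOrWhirl M := by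
  by_cases hgF : g ∈ f '' Iio k
  · obtain ⟨j, hj, rfl⟩ := hgF
    exact hf.isWheelOrWhirl_of_triad hM hT (not_lt.1 fun h ↦ hg ⟨j, h, rfl⟩) hj hD
  · have hgE : g ∈ M.E := hD.1.1 (mem_insert _ _)
    have hE : 5 ≤ M.E.ncard := by
      have hsub : insert g (f '' Iio k) ⊆ M.E :=
        insert_subset hgE (hf.image_Iio_subset_ground le_rfl)
      have hle := ncard_le_ncard hsub M.ground_finite
      rw [ncard_insert_of_notMem hgF (toFinite _), hf.ncard_image_Iio le_rfl] at hle
      omega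
    have hfan := hf.isFan_insert hT hgF hD (hM.not_triangle_of_triad hE hD)
    exact (hgF (hmax.2 _ hfan (subset_insert _ _) ▸ mem_insert _ _)).elim

lemma IsMaximalFan.isWheelOrWhirl_of_triad_zero_two [M.Finite] (hM : ThreeConnected M)
    (hmax : IsMaximalFan M (f '' Iio k)) (hf : IsFanOrd M k f) (hk : 4 ≤ k)
    (hT : Triangle M {f 0, f 1, f 2}) (hg : g ∉ f '' Iio 4) (hD : Triad M {g, f 0, f 2}) :
    IsWheelOrWhirl M := by
  obtain rfl | hk5 := hk.eq_or_lt
  · have h0 : Equiv.swap 1 2 0 = 0 := by decide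
    rw [← image_comp_swap_Iio_four] at hmax hg
    refine hmax.isWheelOrWhirl_of_triad_zero_one hM hf.comp_swap le_rfl ?_ hg ?_
    · simpa [h0, pair_comm (f 2)] using hT
    · simpa [h0] using hD
  · have hT₂ : Triangle M {f 2, f 3, f 4} := hf.triangle_two_mul hT (i := 1) (by omega)
    have hg4 : g = f 4 := by
      have hinter := hT₂.1.inter_cocircuit_ne_singleton (e := f 2) hD.1
      have hg3 : g ≠ f 3 := fun h ↦ hg ⟨3, by simp, h.symm⟩
      have h30 : f 3 ≠ f 0 := hf.ne (by omega) (by omega) (by omega)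
      have h40 : f 4 ≠ f 0 := hf.ne (by omega) (by omega) (by omega)
      grind
    obtain ⟨e, he, heD⟩ := hf.exists_triad_zero_one hM hk5 hT (hg4 ▸ hD)
    exact hmax.isWheelOrWhirl_of_triad_zero_one hM hf hk hT
      (fun h ↦ he (image_mono (Iio_subset_Iio (by omega)) h)) heD

lemma IsMaximalFan.threeConnected_delete [M.Finite] (hM : ThreeConnected M)
    (hW : ¬ IsWheelOrWhirl M) (hmax : IsMaximalFan M (f '' Iio k)) (hf : IsFanOrd M k f)
    (hk : 4 ≤ k) (hT : Triangle M {f 0, f 1, f 2}) : ThreeConnected (delete M {f 0}) := by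
  by_contra hnot
  have hE : 4 ≤ M.E.ncard := hk.trans hf.le_ncard_ground
  obtain ⟨g, hg, hD⟩ := hM.exists_triad_of_not_threeConnected_delete hE hT
    (hf.triad_two_mul_add_one hT (i := 0) (by omega)) (hf.ne (by omega) (by omega) (by omega))
    (hf.ne (by omega) (by omega) (by omega)) (hf.ne (by omega) (by omega) (by omega)) hnot
  have hgF : g ∉ f '' Iio 4 := by
    rintro ⟨i, hi, rfl⟩
    rw [mem_Iio] at hi
    interval_cases i <;> simp at hg
  obtain hD | hD := hD
  · exact hW (hmax.isWheelOrWhirl_of_triad_zero_one hM hf hk hT hgF hD)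
  · exact hW (hmax.isWheelOrWhirl_of_triad_zero_two hM hf hk hT hgF hD)

end MaximalFan

section Duality

variable {M : Matroid α} {F : Set α} {f : ℕ → α} {k : ℕ}

lemma IsFanOrd.dual (hf : IsFanOrd M k f) : IsFanOrd M✶ k f := by
  obtain ⟨hk, hinj, hE, hfirst, hstep⟩ := hf
  simp only [IsFanOrd, triangle_dual_iff, triad_dual_iff]
  exact ⟨hk, hinj, hE, hfirst.symm, fun i hi ↦ (hstep i hi).symm⟩

lemma IsFan.dual (hF : IsFan M F) : IsFan M✶ F := by
  obtain ⟨k, f, hf, rfl⟩ := hF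
  exact ⟨k, f, hf.dual, rfl⟩

lemma IsMaximalFan.dual (hF : IsMaximalFan M F) : IsMaximalFan M✶ F :=
  ⟨hF.1.dual, fun F' hF' hsub ↦ hF.2 F' (M.dual_dual ▸ hF'.dual) hsub⟩

lemma IsWheelOrWhirl.dual (h : IsWheelOrWhirl M) : IsWheelOrWhirl M✶ := by
  obtain ⟨n, s, r, hn, hinj, hE, ht⟩ := h
  refine ⟨n, r, fun i ↦ s (i + 1), hn, ?_, ?_, fun i ↦ ?_⟩
  · let φ : ZMod n × Bool → ZMod n × Bool := fun p ↦ (if p.2 then p.1 else p.1 + 1, !p.2)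
    have hφ : Function.Injective φ := by
      rintro ⟨i, _ | _⟩ ⟨j, _ | _⟩ h <;> simp_all [φ]
    convert hinj.comp hφ using 1
    ext ⟨i, _ | _⟩ <;> rfl
  · rw [dual_ground, ← hE, union_comm]
    congr 1
    exact (Equiv.addRight (1 : ZMod n)).surjective.range_comp s
  · rw [triad_dual_iff, triangle_dual_iff]
    exact ⟨(ht i).2, (ht (i + 1)).1⟩

end Duality

end NDP

/-- Ends of a maximal fan with at least four elements in a
3-connected matroid that is not a wheel or a whirl: if the end is a spoke
(the initial triple of its fan ordering is a triangle) then deleting it keeps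
3-connectedness; if it is a rim (the initial triple is a triad) then contracting
it keeps 3-connectedness.  (Quantifying over all fan orderings of `F` covers
both ends of the fan.) -/
theorem stmt19 (M : Matroid α) [M.Finite] (hM : NDP.ThreeConnected M)
    (hW : ¬ NDP.IsWheelOrWhirl M) (F : Set α) (hmax : NDP.IsMaximalFan M F)
    (k : ℕ) (f : ℕ → α) (hord : NDP.IsFanOrd M k f) (hF : F = f '' Set.Iio k)
    (hk : 4 ≤ k) :
    (NDP.Triangle M {f 0, f 1, f 2} → NDP.ThreeConnected (NDP.delete M {f 0})) ∧
    (NDP.Triad M {f 0, f 1, f 2} → NDP.ThreeConnected (NDP.contract M {f 0})) := by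
  subst hF
  refine ⟨hmax.threeConnected_delete hM hW hord hk, fun hD ↦ ?_⟩
  have hW_dual : ¬ NDP.IsWheelOrWhirl M✶ := fun h ↦ hW (M.dual_dual ▸ h.dual)
  exact (hmax.dual.threeConnected_delete hM.dual hW_dual hord.dual hk hD).dual
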